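/- For any given positive integers s < m and any field K, there exists a finite simple graph G with no isolated vertices and matching number ν(G) = m such that g_{I(G)}(k) = s − (k − 1) for k = 1,…,s and g_{I(G)}(k) = 0 for k = s+1,…,m. -/

import Mathlib

open MvPolynomial

/-- The squarefree monomial `∏ i ∈ F, xᵢ`. -/
noncomputable def sqMon (K : Type) [Field K] {σ : Type} (F : Finset σ) :
    MvPolynomial σ K := ∏ i ∈ F, X i

/-- `I` is a squarefree monomial ideal if it is generated by squarefree monomials. -/
def IsSqfreeMonomialIdeal (K : Type) [Field K] {σ : Type}
    (I : Ideal (MvPolynomial σ K)) : Prop :=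
  ∃ 𝒢 : Set (Finset σ), I = Ideal.span ((sqMon K) '' 𝒢)

/-- The `k`-th squarefree power `I^[k]`: the ideal generated by all squarefree
monomials belonging to `I^k`. -/
noncomputable def sqfreePower (K : Type) [Field K] {σ : Type}
    (I : Ideal (MvPolynomial σ K)) (k : ℕ) : Ideal (MvPolynomial σ K) :=
  Ideal.span {m | ∃ F : Finset σ, m = sqMon K F ∧ m ∈ I ^ k}

/-- The monomial grade `ν(I)`: the largest `k` with `I^[k] ≠ (0)`. -/
noncomputable def monGrade (K : Type) [Field K] {σ : Type}
    (I : Ideal (MvPolynomial σ K)) : ℕ :=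
  sSup {k | sqfreePower K I k ≠ ⊥}

/-- The initial degree of a squarefree monomial ideal: the least degree of a
(squarefree) monomial belonging to it. -/
noncomputable def indeg (K : Type) [Field K] {σ : Type}
    (I : Ideal (MvPolynomial σ K)) : ℕ :=
  sInf {d | ∃ F : Finset σ, F.card = d ∧ sqMon K F ∈ I}

/-- The depth of `S/I` over the polynomial ring `S`: the longest length of a
regular sequence on `S/I` consisting of elements of the irrelevant maximal ideal. -/
noncomputable def polyDepth (K : Type) [Field K] {σ : Type}
    (I : Ideal (MvPolynomial σ K)) : ℕ :=
  sSup {k | ∃ rs : List (MvPolynomial σ K), rs.length = k ∧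
    (∀ r ∈ rs, r ∈ Ideal.span (Set.range (X : σ → MvPolynomial σ K))) ∧
    RingTheory.Sequence.IsRegular (MvPolynomial σ K ⧸ I) rs}

/-- The normalized depth function `g_I(k) = depth(S/I^[k]) - (indeg(I^[k]) - 1)`. -/
noncomputable def nDepth (K : Type) [Field K] {σ : Type}
    (I : Ideal (MvPolynomial σ K)) (k : ℕ) : ℤ :=
  (polyDepth K (sqfreePower K I k) : ℤ) - ((indeg K (sqfreePower K I k) : ℤ) - 1)

open MvPolynomial

/-- The edge ideal of a graph, generated by `xᵢxⱼ` for edges `{i,j}`. -/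
noncomputable def edgeIdeal (K : Type) [Field K] {V : Type} (G : SimpleGraph V) :
    Ideal (MvPolynomial V K) :=
  Ideal.span {m | ∃ i j, G.Adj i j ∧ m = X i * X j}

/-- A finite set of edges of `G` forming a matching (pairwise vertex-disjoint edges). -/
def IsMatchingSet {V : Type} (G : SimpleGraph V) (M : Finset (Sym2 V)) : Prop :=
  (↑M ⊆ G.edgeSet) ∧ ∀ e ∈ M, ∀ f ∈ M, e ≠ f → ∀ v, v ∈ e → v ∉ f

/-- The vertex set of a set of edges. -/
def matchVerts {V : Type} (M : Finset (Sym2 V)) : Set V := {v | ∃ e ∈ M, v ∈ e}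

/-- The matching number of `G`. -/
noncomputable def matchNum {V : Type} (G : SimpleGraph V) : ℕ :=
  sSup {k | ∃ M : Finset (Sym2 V), IsMatchingSet G M ∧ M.card = k}

/-- A graph is chordal if it has no induced cycle of length `≥ 4`. -/
def IsChordal {V : Type} (G : SimpleGraph V) : Prop :=
  ∀ m : ℕ, 4 ≤ m → ∀ v : ZMod m → V, Function.Injective v →
    ¬ (∀ i j : ZMod m, G.Adj (v i) (v j) ↔ (j = i + 1 ∨ i = j + 1))

/-- `v` is a cut vertex of the connected graph `G`:
removing it disconnects the graph. -/
def IsCutVertex {V : Type} (G : SimpleGraph V) (v : V) : Prop :=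
  G.Connected ∧ ¬ (G.induce {u | u ≠ v}).Connected

/-- `G` has no isolated vertices. -/
def NoIsolated {V : Type} (G : SimpleGraph V) : Prop := ∀ v, ∃ u, G.Adj v u

/-- `rs` is a weakly regular sequence on `R ⧸ J`, expressed through ideals of `R`. -/
def IsRegularModulo {R : Type*} [CommRing R] : Ideal R → List R → Prop
  | _, [] => True
  | J, f :: fs => (∀ g, f * g ∈ J → g ∈ J) ∧ IsRegularModulo (J ⊔ Ideal.span {f}) fs

open scoped Pointwise

section RegularSequences

variable {R : Type*} [CommRing R]

lemma mem_sup_span_singleton_iff {J : Ideal R} {f x : R} :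
    x ∈ J ⊔ Ideal.span {f} ↔ ∃ g, x - f * g ∈ J := by
  rw [Submodule.mem_sup]
  constructor
  · rintro ⟨y, hy, z, hz, rfl⟩
    obtain ⟨g, rfl⟩ := Ideal.mem_span_singleton'.1 hz
    exact ⟨g, by simpa [mul_comm] using hy⟩
  · rintro ⟨g, hg⟩
    exact ⟨_, hg, f * g, Ideal.mem_span_singleton'.2 ⟨g, mul_comm _ _⟩, by ring⟩

lemma isSMulRegular_quotient_iff (J : Ideal R) (f : R) :
    IsSMulRegular (R ⧸ J) f ↔ ∀ g, f * g ∈ J → g ∈ J := by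
  rw [isSMulRegular_iff_right_eq_zero_of_smul]
  constructor
  · intro h g hg
    have := h (Ideal.Quotient.mk J g) (by
      rw [Algebra.smul_def, Ideal.Quotient.algebraMap_eq, ← map_mul]
      exact Ideal.Quotient.eq_zero_iff_mem.2 hg)
    exact Ideal.Quotient.eq_zero_iff_mem.1 this
  · intro h x hx
    obtain ⟨g, rfl⟩ := Ideal.Quotient.mk_surjective x
    rw [Algebra.smul_def, Ideal.Quotient.algebraMap_eq, ← map_mul] at hx
    exact Ideal.Quotient.eq_zero_iff_mem.2 (h g (Ideal.Quotient.eq_zero_iff_mem.1 hx))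

/-- Dividing `R ⧸ J` by `f` gives `R ⧸ (J + (f))`. -/
noncomputable def quotSMulTopQuotientEquiv (J : Ideal R) (f : R) :
    QuotSMulTop f (R ⧸ J) ≃ₗ[R] R ⧸ (J ⊔ Ideal.span {f}) :=
  let φ : R →ₗ[R] QuotSMulTop f (R ⧸ J) :=
    (Submodule.mkQ (f • (⊤ : Submodule R (R ⧸ J)))).comp (Submodule.mkQ J)
  have hφ : Function.Surjective φ :=
    (Submodule.mkQ_surjective _).comp (Submodule.mkQ_surjective _)
  have hker : LinearMap.ker φ = J ⊔ Ideal.span {f} := by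
    ext x
    rw [mem_sup_span_singleton_iff, LinearMap.mem_ker]
    simp only [φ, LinearMap.comp_apply, Submodule.mkQ_apply, Submodule.Quotient.mk_eq_zero,
      Submodule.mem_smul_pointwise_iff_exists, Submodule.mem_top, true_and]
    constructor
    · rintro ⟨y, hy⟩
      obtain ⟨g, rfl⟩ := Submodule.Quotient.mk_surjective _ y
      refine ⟨g, (Submodule.Quotient.eq J).1 ?_⟩
      rw [← hy, ← smul_eq_mul, Submodule.Quotient.mk_smul]
    · rintro ⟨g, hg⟩
      refine ⟨Submodule.Quotient.mk g, ?_⟩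
      rw [← Submodule.Quotient.mk_smul]
      exact ((Submodule.Quotient.eq J).2 hg).symm
  (φ.quotKerEquivOfSurjective hφ).symm.trans (Submodule.quotEquivOfEq _ _ hker)

lemma isWeaklyRegular_quotient_iff (J : Ideal R) (rs : List R) :
    RingTheory.Sequence.IsWeaklyRegular (R ⧸ J) rs ↔ IsRegularModulo J rs := by
  induction rs generalizing J with
  | nil => simp [IsRegularModulo]
  | cons f fs ih =>
    rw [RingTheory.Sequence.isWeaklyRegular_cons_iff, IsRegularModulo,
      isSMulRegular_quotient_iff, (quotSMulTopQuotientEquiv J f).isWeaklyRegular_congr, ih]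

lemma isRegularModulo_top (rs : List R) : IsRegularModulo (⊤ : Ideal R) rs := by
  induction rs with
  | nil => trivial
  | cons f fs ih => exact ⟨fun _ _ => trivial, by simpa using ih⟩

/-- A sequence regular modulo `J : x` and modulo `J + (x)` is regular modulo `J`. -/
lemma IsRegularModulo.of_colon_of_sup {J J' : Ideal R} {x : R} {rs : List R}
    (hJ' : ∀ h, h ∈ J' ↔ x * h ∈ J) (h₁ : IsRegularModulo J' rs)
    (h₂ : IsRegularModulo (J ⊔ Ideal.span {x}) rs) : IsRegularModulo J rs := by
  induction rs generalizing J J' with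
  | nil => trivial
  | cons f fs ih =>
    obtain ⟨h₁f, h₁⟩ := h₁
    obtain ⟨h₂f, h₂⟩ := h₂
    refine ⟨fun g hg => ?_, ih (J' := J' ⊔ Ideal.span {f}) (fun h => ?_) h₁ ?_⟩
    · obtain ⟨h, hh⟩ := mem_sup_span_singleton_iff.1
        (h₂f g ((le_sup_left : J ≤ J ⊔ Ideal.span {x}) hg))
      have h1 : f * h ∈ J' := by
        rw [hJ']
        convert J.sub_mem hg (J.mul_mem_left f hh) using 1
        ring
      simpa using J.add_mem hh ((hJ' h).1 (h₁f h h1))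
    · constructor
      · intro hh
        obtain ⟨g, hg⟩ := mem_sup_span_singleton_iff.1 hh
        refine mem_sup_span_singleton_iff.2 ⟨x * g, ?_⟩
        convert (hJ' _).1 hg using 1
        ring
      · intro hh
        obtain ⟨g, hg⟩ := mem_sup_span_singleton_iff.1 hh
        have h1 : f * g ∈ J ⊔ Ideal.span {x} := by
          refine mem_sup_span_singleton_iff.2 ⟨h, ?_⟩
          convert J.neg_mem hg using 1
          ring
        obtain ⟨g', hg'⟩ := mem_sup_span_singleton_iff.1 (h₂f g h1)
        refine mem_sup_span_singleton_iff.2 ⟨g', (hJ' _).2 ?_⟩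
        convert J.add_mem hg (J.mul_mem_left f hg') using 1
        ring
    · rwa [sup_right_comm]

end RegularSequences

section DepthBound

open Order IsLocalRing

/-- Over a local ring, a weakly regular sequence in the maximal ideal is no longer than
the dimension of `R ⧸ P` for any associated prime `P`. -/
lemma length_le_coheight_of_isAssociatedPrime {R : Type*} [CommRing R] [IsLocalRing R]
    [IsNoetherianRing R] {M : Type*} [AddCommGroup M] [Module R M] [Module.Finite R M]
    (rs : List R) (hrs : RingTheory.Sequence.IsWeaklyRegular M rs)
    (hmem : ∀ r ∈ rs, r ∈ maximalIdeal R) (P : PrimeSpectrum R)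
    (hP : IsAssociatedPrime P.asIdeal M) : (rs.length : ℕ∞) ≤ coheight P := by
  induction rs generalizing M P with
  | nil => simp
  | cons r rs ih =>
    obtain ⟨hr, hrs⟩ := (RingTheory.Sequence.isWeaklyRegular_cons_iff M r rs).1 hrs
    obtain ⟨n₀, hn₀⟩ := (isAssociatedPrime_iff.1 hP).2
    have hn₀_ne : n₀ ≠ 0 := by
      rintro rfl
      exact P.2.ne_top (by rw [hn₀]; ext; simp [Submodule.mem_colon_singleton])
    have hrm : r ∈ maximalIdeal R := hmem r (by simp)
    let N : Submodule R M :=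
      { carrier := {n | ∀ p ∈ P.asIdeal, p • n = 0}
        add_mem' := fun ha hb p hp => by rw [smul_add, ha p hp, hb p hp, add_zero]
        zero_mem' := fun p _ => smul_zero p
        smul_mem' := fun c n hn p hp => by rw [smul_comm, hn p hp, smul_zero] }
    have hn₀N : n₀ ∈ N := fun p hp => by
      rw [hn₀, Submodule.mem_colon_singleton] at hp
      simpa using hp
    have hN : ∃ n ∈ N, n ∉ r • (⊤ : Submodule R M) := by
      by_contra! hcon
      have hle : N ≤ maximalIdeal R • N := by
        intro n hn
        obtain ⟨n', -, rfl⟩ := (Submodule.mem_smul_pointwise_iff_exists _ _ _).1 (hcon n hn)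
        refine Submodule.smul_mem_smul hrm fun p hp => hr ?_
        have := hn p hp
        simp only [smul_zero]
        rw [smul_comm]
        exact this
      have hbot := Submodule.eq_bot_of_le_smul_of_le_jacobson_bot (maximalIdeal R) N
        (IsNoetherian.noetherian N) hle (IsLocalRing.maximalIdeal_le_jacobson _)
      exact hn₀_ne (by simpa [hbot] using hn₀N)
    obtain ⟨n, hnN, hn⟩ := hN
    obtain ⟨Q, hQ, hle⟩ := exists_le_isAssociatedPrime_of_isNoetherianRing R
      (M := QuotSMulTop r M) (Submodule.Quotient.mk n)
      (by rwa [ne_eq, Submodule.Quotient.mk_eq_zero])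
    have hlt : P < ⟨Q, hQ.isPrime⟩ := by
      refine lt_of_le_of_ne (fun p hp => hle ?_) fun h => ?_
      · rw [Submodule.mem_colon_singleton, ← Submodule.Quotient.mk_smul, hnN p hp]
        simp
      · have hrQ : r ∈ Q := hle (by
          rw [Submodule.mem_colon_singleton, ← Submodule.Quotient.mk_smul, Submodule.mem_bot,
            Submodule.Quotient.mk_eq_zero]
          exact Submodule.smul_mem_pointwise_smul _ _ _ trivial)
        have hrP : r ∈ P.asIdeal := by rw [h]; exact hrQ
        rw [hn₀, Submodule.mem_colon_singleton] at hrP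
        exact hn₀_ne (hr (by simpa using hrP))
    have := ih hrs (fun r' hr' => hmem r' (by simp [hr'])) ⟨Q, hQ.isPrime⟩ hQ
    calc ((r :: rs).length : ℕ∞) = rs.length + 1 := by simp
      _ ≤ coheight (⟨Q, hQ.isPrime⟩ : PrimeSpectrum R) + 1 := by gcongr
      _ ≤ coheight P := coheight_add_one_le hlt

/-- A weakly regular sequence contained in a prime `m` is no longer than `dim R ⧸ P` for any
associated prime `P ≤ m`. -/
lemma length_le_ringKrullDim_quotient {R : Type*} [CommRing R] [IsNoetherianRing R]
    {M : Type*} [AddCommGroup M] [Module R M] [Module.Finite R M]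
    (rs : List R) (hrs : RingTheory.Sequence.IsWeaklyRegular M rs)
    (m : Ideal R) [m.IsPrime] (hmem : ∀ r ∈ rs, r ∈ m) (P : Ideal R)
    (hP : IsAssociatedPrime P M) (hPm : P ≤ m) :
    (rs.length : WithBot ℕ∞) ≤ ringKrullDim (R ⧸ P) := by
  have := hP.isPrime
  let Rm := Localization.AtPrime m
  let Mm := LocalizedModule.AtPrime m M
  have hreg := hrs.of_isLocalizedModule Rm m.primeCompl
    (LocalizedModule.mkLinearMap m.primeCompl M)
  have hdisj : Disjoint (m.primeCompl : Set R) P :=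
    Set.disjoint_left.2 fun x hx hxP => hx (hPm hxP)
  have hcomap : (P.map (algebraMap R Rm)).comap (algebraMap R Rm) = P :=
    IsLocalization.under_map_of_isPrime_disjoint m.primeCompl Rm inferInstance hdisj
  have hprime : (P.map (algebraMap R Rm)).IsPrime :=
    IsLocalization.isPrime_of_isPrime_disjoint m.primeCompl Rm P inferInstance hdisj
  have hass : IsAssociatedPrime (P.map (algebraMap R Rm)) Mm :=
    Module.associatedPrimes.mem_associatedPrimes_of_comap_mem_associatedPrimes_of_isLocalizedModule
      m.primeCompl (LocalizedModule.mkLinearMap m.primeCompl M) _ (by rw [hcomap]; exact hP)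
  have h1 := length_le_coheight_of_isAssociatedPrime _ hreg (by
    intro r hr
    obtain ⟨r', hr', rfl⟩ := List.mem_map.1 hr
    exact (IsLocalization.AtPrime.to_map_mem_maximal_iff Rm m r').2 (hmem r' hr'))
    ⟨_, hprime⟩ hass
  have h2 : coheight (⟨_, hprime⟩ : PrimeSpectrum Rm) ≤
      krullDim (PrimeSpectrum.zeroLocus (P : Set R)) := by
    rw [coheight_eq_krullDim_Ici]
    let g : Set.Ici (⟨_, hprime⟩ : PrimeSpectrum Rm) → PrimeSpectrum.zeroLocus (P : Set R) :=
      fun q => ⟨PrimeSpectrum.comap (algebraMap R Rm) q.1, fun x hx =>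
        q.2 (Ideal.mem_map_of_mem (algebraMap R Rm) hx)⟩
    refine krullDim_le_of_strictMono g fun a b hab => ?_
    exact (IsLocalization.orderEmbedding m.primeCompl Rm).strictMono hab
  rw [ringKrullDim_quotient]
  rw [List.length_map] at h1
  exact le_trans (by exact_mod_cast h1) h2

end DepthBound

section CoordinateSubspaces

open Finset

variable {σ : Type} (K : Type) [Field K]

attribute [local instance] MvPolynomial.gradedAlgebra

/-- The prime ideal generated by the variables indexed by `B`. -/
noncomputable def varIdeal (B : Finset σ) : Ideal (MvPolynomial σ K) :=
  Ideal.span (X '' (B : Set σ))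

variable {K}

lemma mem_varIdeal {B : Finset σ} {f : MvPolynomial σ K} :
    f ∈ varIdeal K B ↔ ∀ u ∈ f.support, ∃ i ∈ B, u i ≠ 0 :=
  mem_ideal_span_X_image

lemma X_mem_varIdeal {B : Finset σ} {i : σ} (hi : i ∈ B) : X i ∈ varIdeal K B :=
  Ideal.subset_span ⟨i, hi, rfl⟩

lemma X_notMem_varIdeal {B : Finset σ} {i : σ} (hi : i ∉ B) : X i ∉ varIdeal K B := by
  rw [mem_varIdeal]
  intro h
  obtain ⟨j, hj, hne⟩ := h (Finsupp.single i 1) (by simp [MvPolynomial.support_X])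
  have : i ≠ j := fun h => hi (h ▸ hj)
  exact hne (by simp [this])

variable [DecidableEq σ]

/-- Setting the variables indexed by `B` to zero. -/
noncomputable def killVars (B : Finset σ) : MvPolynomial σ K →ₐ[K] MvPolynomial σ K :=
  aeval fun i => if i ∈ B then 0 else X i

lemma sub_killVars_mem (B : Finset σ) (f : MvPolynomial σ K) :
    f - killVars B f ∈ varIdeal K B := by
  have : (Ideal.Quotient.mkₐ K (varIdeal K B)).comp (killVars B) =
      Ideal.Quotient.mkₐ K (varIdeal K B) := by
    ext i
    by_cases hi : i ∈ B
    · have := Ideal.Quotient.eq_zero_iff_mem.2 (X_mem_varIdeal (K := K) hi)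
      simp [killVars, hi, this]
    · simp [killVars, hi]
  refine Ideal.Quotient.eq.1 ?_
  exact (DFunLike.congr_fun this f).symm

lemma mem_varIdeal_iff_killVars {B : Finset σ} {f : MvPolynomial σ K} :
    f ∈ varIdeal K B ↔ killVars B f = 0 := by
  constructor
  · intro hf
    have hle : varIdeal K B ≤ RingHom.ker (killVars (K := K) B) := by
      rw [varIdeal, Ideal.span_le]
      rintro _ ⟨i, hi, rfl⟩
      have hi : i ∈ B := hi
      simp [killVars, hi]
    exact hle hf
  · intro hf
    simpa [hf] using sub_killVars_mem B f

instance isPrime_varIdeal (B : Finset σ) : (varIdeal K B).IsPrime := by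
  have : varIdeal K B = RingHom.ker (killVars (K := K) B) := by
    ext f
    exact mem_varIdeal_iff_killVars
  rw [this]
  exact RingHom.ker_isPrime _

lemma varIdeal_sup_span_X (B : Finset σ) (i : σ) :
    varIdeal K B ⊔ Ideal.span {X i} = varIdeal K (insert i B) := by
  rw [varIdeal, varIdeal, ← Ideal.span_union, coe_insert, Set.image_insert_eq, Set.union_comm,
    Set.singleton_union]

lemma sqMon_notMem_varIdeal {A B : Finset σ} (h : Disjoint A B) : sqMon K A ∉ varIdeal K B := by
  rw [sqMon]
  intro hA
  obtain ⟨i, hi, hX⟩ := (isPrime_varIdeal B).prod_mem_iff.1 hA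
  exact X_notMem_varIdeal (disjoint_left.1 h hi) hX

omit [DecidableEq σ] in
lemma isHomogeneous_varIdeal (B : Finset σ) :
    (varIdeal K B).IsHomogeneous (homogeneousSubmodule σ K) := by
  refine Ideal.homogeneous_span _ _ ?_
  rintro _ ⟨i, -, rfl⟩
  exact ⟨1, isHomogeneous_X K i⟩

lemma ringKrullDim_quotient_varIdeal_le [Fintype σ] (B : Finset σ) :
    ringKrullDim (MvPolynomial σ K ⧸ varIdeal K B) ≤ (Bᶜ.card : WithBot ℕ∞) := by
  let φ : MvPolynomial {i // i ∈ Bᶜ} K →ₐ[K] MvPolynomial σ K ⧸ varIdeal K B :=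
    aeval fun i => Ideal.Quotient.mk _ (X i.1)
  have hφ : Function.Surjective φ := by
    rw [← AlgHom.range_eq_top, eq_top_iff]
    have hle : (Ideal.Quotient.mkₐ K (varIdeal K B)).range ≤ φ.range := by
      rw [← Algebra.map_top, ← MvPolynomial.adjoin_range_X, AlgHom.map_adjoin,
        Algebra.adjoin_le_iff]
      rintro _ ⟨_, ⟨i, rfl⟩, rfl⟩
      by_cases hi : i ∈ B
      · refine ⟨0, ?_⟩
        rw [map_zero]
        exact (Ideal.Quotient.eq_zero_iff_mem.2 (X_mem_varIdeal hi)).symm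
      · exact ⟨X ⟨i, by simpa using hi⟩, by simp [φ]⟩
    rw [(AlgHom.range_eq_top _).2 (Ideal.Quotient.mkₐ_surjective K (varIdeal K B))] at hle
    exact hle
  refine (ringKrullDim_le_of_surjective φ.toRingHom hφ).trans ?_
  rw [MvPolynomial.ringKrullDim_of_isNoetherianRing, ringKrullDim_eq_zero_of_field]
  simp

omit [DecidableEq σ] in
lemma homogeneous_sup_span {J : Ideal (MvPolynomial σ K)}
    (hJ : J.IsHomogeneous (homogeneousSubmodule σ K)) {f : MvPolynomial σ K}
    (hf : SetLike.IsHomogeneousElem (homogeneousSubmodule σ K) f) :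
    (J ⊔ Ideal.span {f}).IsHomogeneous (homogeneousSubmodule σ K) :=
  hJ.sup (Ideal.homogeneous_span _ _ (by rintro _ rfl; exact hf))

omit [DecidableEq σ] in
/-- For homogeneous data, a variable which is regular modulo `J` can be moved from the beginning
of a regular sequence to its end. -/
lemma IsRegularModulo.of_sup_span_X {J : Ideal (MvPolynomial σ K)}
    (hJ : J.IsHomogeneous (homogeneousSubmodule σ K)) {a : σ}
    (ha : ∀ g, X a * g ∈ J → g ∈ J) {rs : List (MvPolynomial σ K)}
    (hrs : ∀ r ∈ rs, SetLike.IsHomogeneousElem (homogeneousSubmodule σ K) r)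
    (h : IsRegularModulo (J ⊔ Ideal.span {X a}) rs) : IsRegularModulo J rs := by
  induction rs generalizing J with
  | nil => trivial
  | cons f fs ih =>
    obtain ⟨hf, hfs⟩ := h
    have step : ∀ g, f * g ∈ J → ∃ h, g - X a * h ∈ J ∧ f * h ∈ J := by
      intro g hg
      obtain ⟨h, hh⟩ := mem_sup_span_singleton_iff.1
        (hf g ((le_sup_left : J ≤ J ⊔ Ideal.span {X a}) hg))
      refine ⟨h, hh, ha _ ?_⟩
      convert J.sub_mem hg (J.mul_mem_left f hh) using 1
      ring
    refine ⟨fun g hg => ?_, ih (homogeneous_sup_span hJ (hrs f (by simp))) (fun h hh => ?_)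
      (fun r hr => hrs r (by simp [hr])) (by rwa [sup_right_comm])⟩
    · have hpow : ∀ n, ∃ h, g - X a ^ n * h ∈ J ∧ f * h ∈ J := by
        intro n
        induction n with
        | zero => exact ⟨g, by simp, hg⟩
        | succ n ihn =>
          obtain ⟨h, hh, hfh⟩ := ihn
          obtain ⟨h', hh', hfh'⟩ := step h hfh
          refine ⟨h', ?_, hfh'⟩
          convert J.add_mem hh (J.mul_mem_left (X a ^ n) hh') using 1
          ring
      rw [mem_iff_homogeneousComponent_mem hJ]
      intro c
      obtain ⟨h, hh, -⟩ := hpow (c + 1)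
      have hc := homogeneousComponent_mem_of_mem hJ hh c
      have hzero : homogeneousComponent c (X a ^ (c + 1) * h) = 0 := by
        apply homogeneousComponent_eq_zero'
        intro u hu hdeg
        have hXa : X a ∈ idealOfVars σ K := Ideal.subset_span (Set.mem_range_self a)
        have hmem : X a ^ (c + 1) * h ∈ idealOfVars σ K ^ (c + 1) :=
          Ideal.mul_mem_right _ _ (Ideal.pow_mem_pow hXa _)
        have := (mem_pow_idealOfVars_iff _ _).1 hmem u hu
        omega
      rwa [map_sub, hzero, sub_zero] at hc
    · obtain ⟨g, hg⟩ := mem_sup_span_singleton_iff.1 hh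
      have h1 : f * g ∈ J ⊔ Ideal.span {X a} := by
        refine mem_sup_span_singleton_iff.2 ⟨h, ?_⟩
        convert J.neg_mem hg using 1
        ring
      obtain ⟨g', hg'⟩ := mem_sup_span_singleton_iff.1 (hf g h1)
      refine mem_sup_span_singleton_iff.2 ⟨g', ha _ ?_⟩
      convert J.add_mem hg (J.mul_mem_left f hg') using 1
      ring

variable [Fintype σ]

variable (σ K) in
/-- The elementary symmetric polynomials of degrees `d, d - 1, …, 1`. -/
noncomputable def esymmList : ℕ → List (MvPolynomial σ K)
  | 0 => []
  | d + 1 => esymm σ K (d + 1) :: esymmList d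

omit [DecidableEq σ] in
lemma length_esymmList (d : ℕ) : (esymmList σ K d).length = d := by
  induction d with
  | zero => rfl
  | succ d ih => simp [esymmList, ih]

omit [DecidableEq σ] in
lemma exists_eq_esymm_of_mem_esymmList {d : ℕ} {r : MvPolynomial σ K}
    (hr : r ∈ esymmList σ K d) : ∃ j, r = esymm σ K (j + 1) := by
  induction d with
  | zero => simp [esymmList] at hr
  | succ d ih =>
    rcases List.mem_cons.1 hr with rfl | hr
    · exact ⟨d, rfl⟩
    · exact ih hr

omit [DecidableEq σ] in
lemma esymm_succ_mem_idealOfVars (j : ℕ) : esymm σ K (j + 1) ∈ idealOfVars σ K := by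
  refine Ideal.sum_mem _ fun t ht => ?_
  obtain ⟨i, hi⟩ : t.Nonempty := by
    rw [← card_pos, (mem_powersetCard.1 ht).2]
    omega
  exact Ideal.mem_of_dvd _ (dvd_prod_of_mem _ hi) (Ideal.subset_span ⟨i, rfl⟩)

omit [DecidableEq σ] in
lemma isHomogeneousElem_esymm (j : ℕ) :
    SetLike.IsHomogeneousElem (homogeneousSubmodule σ K) (esymm σ K j) := by
  refine ⟨j, IsHomogeneous.sum _ _ _ fun t ht => ?_⟩
  have := IsHomogeneous.prod (R := K) t X (fun _ => 1) fun i _ => isHomogeneous_X K i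
  simpa [(mem_powersetCard.1 ht).2] using this

lemma esymm_sub_sqMon_mem (B : Finset σ) :
    esymm σ K Bᶜ.card - sqMon K Bᶜ ∈ varIdeal K B := by
  have hB : Bᶜ ∈ powersetCard Bᶜ.card (univ : Finset σ) := by simp [mem_powersetCard]
  rw [esymm, ← add_sum_erase _ _ hB, sqMon, add_sub_cancel_left]
  refine Ideal.sum_mem _ fun t ht => ?_
  obtain ⟨hne, ht⟩ := mem_erase.1 ht
  have hnot : ¬ t ⊆ Bᶜ := fun hsub => hne (eq_of_subset_of_card_le hsub (mem_powersetCard.1 ht).2.ge)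
  obtain ⟨i, hit, hi⟩ := not_subset.1 hnot
  exact Ideal.mem_of_dvd _ (dvd_prod_of_mem _ hit) (X_mem_varIdeal (by simpa using hi))

/-- Regularity modulo all coordinate subspaces of dimension `≥ d` implies regularity modulo
products of variables on coordinate subspaces of larger dimension. -/
lemma isRegularModulo_varIdeal_sup_sqMon {d : ℕ} {rs : List (MvPolynomial σ K)}
    (hrs : ∀ B : Finset σ, d ≤ Bᶜ.card → IsRegularModulo (varIdeal K B) rs)
    (B : Finset σ) (hB : d + 1 ≤ Bᶜ.card) (A : Finset σ) (hA : Disjoint A B) :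
    IsRegularModulo (varIdeal K B ⊔ Ideal.span {sqMon K A}) rs := by
  induction A using Finset.induction_on with
  | empty => simpa [sqMon] using isRegularModulo_top rs
  | insert a A haA ih =>
    obtain ⟨haB, hAB⟩ := disjoint_insert_left.1 hA
    have hprod : sqMon K (insert a A) = X a * sqMon K A := by simp [sqMon, haA]
    refine IsRegularModulo.of_colon_of_sup (x := X a) (fun h => ?_) (ih hAB) ?_
    · rw [mem_sup_span_singleton_iff, mem_sup_span_singleton_iff]
      refine exists_congr fun g => ?_
      rw [hprod, mul_assoc, ← mul_sub, (isPrime_varIdeal B).mul_mem_iff_mem_or_mem]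
      simp [X_notMem_varIdeal haB]
    · have : varIdeal K B ⊔ Ideal.span {sqMon K (insert a A)} ⊔ Ideal.span {X a} =
          varIdeal K (insert a B) := by
        have hle : Ideal.span {sqMon K (insert a A)} ≤ Ideal.span {X a} := by
          rw [Ideal.span_singleton_le_span_singleton, hprod]
          exact dvd_mul_right _ _
        rw [sup_assoc, sup_eq_right.2 hle, varIdeal_sup_span_X]
      rw [this]
      refine hrs _ ?_
      have h1 := card_compl B
      have h2 := card_compl (insert a B)
      rw [card_insert_of_notMem haB] at h2
      omega

/-- The elementary symmetric polynomials of degrees `d, …, 1` form a regular sequence on every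
coordinate subspace of dimension at least `d`. -/
lemma isRegularModulo_varIdeal_esymmList (d : ℕ) (B : Finset σ) (hB : d ≤ Bᶜ.card) :
    IsRegularModulo (varIdeal K B) (esymmList σ K d) := by
  induction d generalizing B with
  | zero => trivial
  | succ d ihd =>
    obtain ⟨n, hn⟩ := Nat.exists_eq_add_of_le hB
    induction n generalizing B with
    | zero =>
      have hcard : Bᶜ.card = d + 1 := by omega
      have hmem := esymm_sub_sqMon_mem (K := K) B
      rw [hcard] at hmem
      have hdisj : Disjoint Bᶜ B := disjoint_compl_left
      refine ⟨fun g hg => ((isPrime_varIdeal B).mem_or_mem hg).resolve_left fun he => ?_, ?_⟩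
      · refine sqMon_notMem_varIdeal (K := K) hdisj ?_
        simpa using Ideal.sub_mem _ he hmem
      · have : varIdeal K B ⊔ Ideal.span {esymm σ K (d + 1)} =
            varIdeal K B ⊔ Ideal.span {sqMon K Bᶜ} := by
          apply le_antisymm <;> refine sup_le le_sup_left ?_ <;>
            rw [Ideal.span_singleton_le_iff_mem, mem_sup_span_singleton_iff]
          · exact ⟨1, by simpa using hmem⟩
          · exact ⟨1, by simpa using neg_mem hmem⟩
        rw [this]
        exact isRegularModulo_varIdeal_sup_sqMon ihd B hB _ hdisj
    | succ n ihn =>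
      obtain ⟨a, ha⟩ : Bᶜ.Nonempty := by
        rw [← card_pos]
        omega
      have haB : a ∉ B := by simpa using ha
      refine IsRegularModulo.of_sup_span_X (a := a) (isHomogeneous_varIdeal B) (fun g hg => ?_)
        (fun r hr => ?_) ?_
      · exact ((isPrime_varIdeal B).mem_or_mem hg).resolve_left (X_notMem_varIdeal haB)
      · obtain ⟨j, rfl⟩ := exists_eq_esymm_of_mem_esymmList hr
        exact isHomogeneousElem_esymm _
      · rw [varIdeal_sup_span_X]
        have h1 := card_compl B
        have h2 := card_compl (insert a B)
        rw [card_insert_of_notMem haB] at h2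
        exact ihn _ (by omega) (by omega)

end CoordinateSubspaces

section ClusterGraphs

open Finset

variable {σ ι : Type} [DecidableEq σ] [DecidableEq ι] (c : σ → ι)

/-- The disjoint union of the complete graphs on the fibres of `c`. -/
def clusterGraph : SimpleGraph σ where
  Adj i j := i ≠ j ∧ c i = c j
  symm := ⟨fun _ _ h => ⟨h.1.symm, h.2.symm⟩⟩
  loopless := ⟨fun _ h => h.1 rfl⟩

/-- The number of elements of `F` of colour `t`. -/
def colorCard (F : Finset σ) (t : ι) : ℕ := #{x ∈ F | c x = t}

omit [DecidableEq σ] in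
lemma colorCard_mono {F F' : Finset σ} (h : F ⊆ F') (t : ι) :
    colorCard c F t ≤ colorCard c F' t :=
  card_le_card (filter_subset_filter _ h)

lemma colorCard_insert {F : Finset σ} {x : σ} (hx : x ∉ F) (t : ι) :
    colorCard c (insert x F) t = colorCard c F t + if c x = t then 1 else 0 := by
  unfold colorCard
  rw [filter_insert]
  split_ifs with h
  · rw [card_insert_of_notMem (by simp [hx])]
  · rfl

omit [DecidableEq σ] in
lemma exists_notMem_of_colorCard_lt {F F' : Finset σ} {t : ι}
    (h : colorCard c F t < colorCard c F' t) : ∃ x ∈ F', x ∉ F ∧ c x = t := by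
  obtain ⟨x, hx, hxF⟩ := exists_mem_notMem_of_card_lt_card h
  simp only [mem_filter, not_and] at hx hxF
  exact ⟨x, hx.1, fun h => hxF h hx.2, hx.2⟩

variable [Fintype ι]

/-- The matching number of the subgraph of `clusterGraph c` induced by `F`. -/
def pairCount (F : Finset σ) : ℕ := ∑ t, colorCard c F t / 2

omit [DecidableEq σ] in
lemma pairCount_mono {F F' : Finset σ} (h : F ⊆ F') : pairCount c F ≤ pairCount c F' :=
  sum_le_sum fun t _ => Nat.div_le_div_right (colorCard_mono c h t)

omit [DecidableEq σ] in
lemma sum_colorCard (F : Finset σ) : ∑ t, colorCard c F t = #F :=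
  (card_eq_sum_card_fiberwise fun _ _ => mem_univ _).symm

omit [DecidableEq σ] in
lemma two_mul_pairCount_le (F : Finset σ) : 2 * pairCount c F ≤ #F := by
  rw [← sum_colorCard c F, pairCount, mul_sum]
  exact sum_le_sum fun t _ => Nat.mul_div_le _ _

lemma pairCount_insert {F : Finset σ} {x : σ} (hx : x ∉ F) :
    pairCount c (insert x F) = pairCount c F + colorCard c F (c x) % 2 := by
  unfold pairCount
  rw [← add_sum_erase _ _ (mem_univ (c x)),
    ← add_sum_erase _ (fun t => colorCard c F t / 2) (mem_univ (c x))]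
  have : ∑ t ∈ univ.erase (c x), colorCard c (insert x F) t / 2 =
      ∑ t ∈ univ.erase (c x), colorCard c F t / 2 := by
    refine sum_congr rfl fun t ht => ?_
    rw [colorCard_insert c hx, if_neg (ne_of_mem_erase ht).symm, add_zero]
  rw [this, colorCard_insert c hx, if_pos rfl]
  omega

lemma pairCount_insert_insert {F : Finset σ} {i j : σ} (hi : i ∉ F) (hj : j ∉ F) (hij : i ≠ j)
    (hc : c i = c j) : pairCount c (insert i (insert j F)) = pairCount c F + 1 := by
  rw [pairCount_insert c (by simp [hi, hij]), pairCount_insert c hj, colorCard_insert c hj, hc,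
    if_pos rfl]
  omega

omit [DecidableEq σ] [DecidableEq ι] [Fintype ι] in
lemma noIsolated_clusterGraph (h : ∀ x, ∃ y, y ≠ x ∧ c y = c x) :
    NoIsolated (clusterGraph c) := by
  intro x
  obtain ⟨y, hy, hc⟩ := h x
  exact ⟨y, hy.symm, hc.symm⟩

variable (K : Type) [Field K]

lemma exists_matching_of_le_pairCount {k : ℕ} {F : Finset σ} (hF : k ≤ pairCount c F) :
    ∃ F' ⊆ F, #F' = 2 * k ∧ sqMon K F' ∈ edgeIdeal K (clusterGraph c) ^ k ∧
      ∃ M : Finset (Sym2 σ), IsMatchingSet (clusterGraph c) M ∧ #M = k ∧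
        ∀ e ∈ M, ∀ v ∈ e, v ∈ F' := by
  induction k generalizing F with
  | zero => exact ⟨∅, empty_subset _, by simp, by simp, ∅, by simp [IsMatchingSet], by simp, by simp⟩
  | succ k ih =>
    obtain ⟨t, -, ht⟩ := exists_ne_zero_of_sum_ne_zero (s := univ)
      (f := fun t => colorCard c F t / 2) (by unfold pairCount at hF; omega)
    have ht : 1 < #{x ∈ F | c x = t} := by
      unfold colorCard at ht
      omega
    obtain ⟨i, hi, j, hj, hij⟩ := one_lt_card.1 ht
    obtain ⟨hi, hci⟩ := mem_filter.1 hi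
    obtain ⟨hj, hcj⟩ := mem_filter.1 hj
    have hFeq : insert i (insert j ((F.erase i).erase j)) = F := by
      rw [insert_erase (mem_erase.2 ⟨hij.symm, hj⟩), insert_erase hi]
    have hpair := pairCount_insert_insert c (F := (F.erase i).erase j) (i := i) (j := j)
      (by simp) (by simp) hij (hci.trans hcj.symm)
    rw [hFeq] at hpair
    obtain ⟨F', hF', hcard, hmem, M, hM, hMcard, hMF⟩ := ih (F := (F.erase i).erase j) (by omega)
    have hjF' : j ∉ F' := fun h => by simpa using hF' h
    have hiF' : i ∉ F' := fun h => by simpa using hF' h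
    have hadj : (clusterGraph c).Adj i j := ⟨hij, hci.trans hcj.symm⟩
    have hnot : s(i, j) ∉ M := fun h => hiF' (hMF _ h i (by simp))
    refine ⟨insert i (insert j F'), ?_, ?_, ?_, insert s(i, j) M, ⟨?_, ?_⟩, ?_, ?_⟩
    · rw [← hFeq]
      exact insert_subset_insert _ (insert_subset_insert _ hF')
    · rw [card_insert_of_notMem (by simp [hij, hiF']), card_insert_of_notMem hjF', hcard]
      ring
    · rw [sqMon, prod_insert (by simp [hij, hiF']), prod_insert hjF', ← mul_assoc, mul_comm,
        pow_succ]
      exact Ideal.mul_mem_mul hmem (Ideal.subset_span ⟨i, j, hadj, rfl⟩)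
    · rw [coe_insert, Set.insert_subset_iff]
      exact ⟨hadj, hM.1⟩
    · have hkey : ∀ e ∈ M, ∀ v ∈ s(i, j), v ∉ e := by
        intro e he v hv hve
        rcases Sym2.mem_iff.1 hv with rfl | rfl
        exacts [hiF' (hMF e he _ hve), hjF' (hMF e he _ hve)]
      intro e he f hf hef v hve hvf
      rcases mem_insert.1 he with rfl | he <;> rcases mem_insert.1 hf with rfl | hf
      · exact hef rfl
      · exact hkey f hf v hve hvf
      · exact hkey e he v hvf hve
      · exact hM.2 e he f hf hef v hve hvf
    · rw [card_insert_of_notMem hnot, hMcard]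
    · intro e he v hv
      rcases mem_insert.1 he with rfl | he
      · rcases Sym2.mem_iff.1 hv with rfl | rfl <;> simp
      · simp [hMF e he v hv]

/-- The number of disjoint monochromatic pairs in the exponent `u`, with multiplicity. -/
def expPairCount [Fintype σ] (u : σ →₀ ℕ) : ℕ := ∑ t, (∑ i with c i = t, u i) / 2

omit [DecidableEq σ] in
lemma expPairCount_add_le [Fintype σ] (u v : σ →₀ ℕ) :
    expPairCount c u + expPairCount c v ≤ expPairCount c (u + v) := by
  unfold expPairCount
  rw [← sum_add_distrib]
  refine sum_le_sum fun t _ => ?_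
  simp only [Finsupp.add_apply, sum_add_distrib]
  omega

lemma expPairCount_sqMon [Fintype σ] (F : Finset σ) :
    expPairCount c (∑ i ∈ F, Finsupp.single i 1) = pairCount c F := by
  unfold expPairCount pairCount colorCard
  refine sum_congr rfl fun t _ => ?_
  congr 1
  simp only [Finsupp.finsetSum_apply, Finsupp.single_apply, sum_ite_eq', sum_boole, Nat.cast_id]
  congr 1
  ext
  simp [and_comm]

lemma one_le_expPairCount [Fintype σ] {i j : σ} (h : c i = c j) :
    1 ≤ expPairCount c (Finsupp.single i 1 + Finsupp.single j 1) := by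
  refine le_trans ?_ (single_le_sum (fun _ _ => Nat.zero_le _) (mem_univ (c i)))
  simp [Finsupp.single_apply, sum_add_distrib, h]

omit [DecidableEq σ] in
lemma sqMon_eq_monomial (F : Finset σ) :
    sqMon K F = monomial (∑ i ∈ F, Finsupp.single i 1) 1 := by
  rw [monomial_sum_one]
  rfl

omit [DecidableEq σ] in
lemma mem_edgeIdeal_iff (G : SimpleGraph σ) {f : MvPolynomial σ K} :
    f ∈ edgeIdeal K G ↔ ∀ u ∈ f.support,
      ∃ v ∈ {v | ∃ i j, G.Adj i j ∧ v = Finsupp.single i 1 + Finsupp.single j 1}, v ≤ u := by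
  rw [← mem_ideal_span_monomial_image, edgeIdeal]
  suffices h : {m : MvPolynomial σ K | ∃ i j, G.Adj i j ∧ m = X i * X j} =
      (fun v => monomial v 1) ''
        {v | ∃ i j, G.Adj i j ∧ v = Finsupp.single i 1 + Finsupp.single j 1} by rw [h]
  ext m
  constructor
  · rintro ⟨i, j, hij, rfl⟩
    exact ⟨_, ⟨i, j, hij, rfl⟩, by simp [X, monomial_mul]⟩
  · rintro ⟨_, ⟨i, j, hij, rfl⟩, rfl⟩
    exact ⟨i, j, hij, by simp [X, monomial_mul]⟩

lemma le_expPairCount_of_mem_pow [Fintype σ] {k : ℕ} {f : MvPolynomial σ K}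
    (hf : f ∈ edgeIdeal K (clusterGraph c) ^ k) {u : σ →₀ ℕ} (hu : u ∈ f.support) :
    k ≤ expPairCount c u := by
  induction k generalizing f u with
  | zero => exact Nat.zero_le _
  | succ k ih =>
    rw [pow_succ] at hf
    induction hf using Submodule.mul_induction_on' with
    | mem_mul_mem p hp q hq =>
      obtain ⟨v, hv, w, hw, rfl⟩ := mem_add.1 (support_mul p q hu)
      refine le_trans (add_le_add (ih hp hv) ?_) (expPairCount_add_le c v w)
      obtain ⟨_, ⟨i, j, hij, rfl⟩, hle⟩ := (mem_edgeIdeal_iff K _).1 hq w hw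
      obtain ⟨w', rfl⟩ := exists_add_of_le hle
      exact (one_le_expPairCount c hij.2).trans
        ((Nat.le_add_right _ _).trans (expPairCount_add_le c _ w'))
    | add p _ q _ hp hq =>
      rcases mem_union.1 (support_add hu) with h | h
      exacts [hp h, hq h]

lemma le_pairCount_of_sqMon_mem_pow [Fintype σ] {k : ℕ} {F : Finset σ}
    (hF : sqMon K F ∈ edgeIdeal K (clusterGraph c) ^ k) : k ≤ pairCount c F := by
  rw [← expPairCount_sqMon]
  refine le_expPairCount_of_mem_pow c K hF ?_
  rw [sqMon_eq_monomial, mem_support_iff, coeff_monomial, if_pos rfl]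
  exact one_ne_zero

/-- The ideal generated by the variables indexed by `B` and the squarefree monomials `sqMon K F`
such that the subgraph of `clusterGraph c` induced by `F ∪ A` has matching number at least `k`. -/
noncomputable def linkIdeal (k : ℕ) (A B : Finset σ) : Ideal (MvPolynomial σ K) :=
  restrictSupportIdeal K {u | k ≤ pairCount c (u.support ∪ A) ∨ ∃ b ∈ B, u b ≠ 0} <| by
    intro u v huv hu
    have hsupp : u.support ⊆ v.support := Finsupp.support_mono huv
    rcases hu with hu | ⟨b, hb, hub⟩
    · exact Or.inl (hu.trans (pairCount_mono c (union_subset_union_left hsupp)))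
    · exact Or.inr ⟨b, hb, by have := huv b; omega⟩

variable {K}

lemma mem_linkIdeal {k : ℕ} {A B : Finset σ} {f : MvPolynomial σ K} :
    f ∈ linkIdeal c K k A B ↔
      ∀ u ∈ f.support, k ≤ pairCount c (u.support ∪ A) ∨ ∃ b ∈ B, u b ≠ 0 :=
  Iff.rfl

lemma support_sum_single (F : Finset σ) :
    (∑ i ∈ F, Finsupp.single i 1 : σ →₀ ℕ).support = F := by
  ext i
  simp [Finsupp.single_apply]

lemma sqMon_mem_linkIdeal {k : ℕ} {A B F : Finset σ} :
    sqMon K F ∈ linkIdeal c K k A B ↔ k ≤ pairCount c (F ∪ A) ∨ ∃ b ∈ B, b ∈ F := by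
  have hsupp : (sqMon K F).support = {∑ i ∈ F, Finsupp.single i 1} := by
    classical rw [sqMon_eq_monomial, support_monomial, if_neg one_ne_zero]
  rw [mem_linkIdeal, hsupp]
  simp only [mem_singleton, forall_eq, support_sum_single, ← Finsupp.mem_support_iff]

variable (K) in
lemma sqfreePower_clusterGraph [Fintype σ] (k : ℕ) :
    sqfreePower K (edgeIdeal K (clusterGraph c)) k = linkIdeal c K k ∅ ∅ := by
  apply le_antisymm
  · rw [sqfreePower, Ideal.span_le]
    rintro _ ⟨F, rfl, hF⟩
    refine (sqMon_mem_linkIdeal c).2 (Or.inl ?_)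
    simpa using le_pairCount_of_sqMon_mem_pow c K hF
  · intro f hf
    rw [f.as_sum]
    refine Ideal.sum_mem _ fun u hu => ?_
    have hk : k ≤ pairCount c u.support := by simpa using hf hu
    obtain ⟨F, hFu, -, hF, -⟩ := exists_matching_of_le_pairCount c K hk
    refine Ideal.mem_of_dvd _ ?_ (Ideal.subset_span ⟨F, rfl, hF⟩)
    rw [sqMon_eq_monomial, monomial_dvd_monomial]
    refine ⟨Or.inr fun i => ?_, one_dvd _⟩
    by_cases hi : i ∈ F
    · have := Finsupp.mem_support_iff.1 (hFu hi)
      simp [Finsupp.single_apply, hi]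
      omega
    · simp [Finsupp.single_apply, hi]

lemma mem_linkIdeal_insert_left {k : ℕ} {A B : Finset σ} {x : σ} (hB : x ∉ B)
    {h : MvPolynomial σ K} :
    h ∈ linkIdeal c K k (insert x A) B ↔ X x * h ∈ linkIdeal c K k A B := by
  rw [mem_linkIdeal, mem_linkIdeal, support_X_mul]
  simp only [mem_map, addLeftEmbedding_apply, forall_exists_index, and_imp,
    forall_apply_eq_imp_iff₂]
  refine forall₂_congr fun u _ => ?_
  have h1 : (Finsupp.single x 1 + u).support ∪ A = u.support ∪ insert x A := by
    ext i
    by_cases hi : i = x <;> simp [hi, Ne.symm]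
  have h2 : ∀ b ∈ B, (Finsupp.single x 1 + u : σ →₀ ℕ) b = u b := by
    intro b hb
    have : x ≠ b := fun h => hB (h ▸ hb)
    simp [this]
  rw [h1]
  refine or_congr_right (exists_congr fun b => and_congr_right fun hb => ?_)
  rw [h2 b hb]

lemma linkIdeal_sup_span_X {k : ℕ} {A B : Finset σ} (x : σ) :
    linkIdeal c K k A B ⊔ Ideal.span {X x} = linkIdeal c K k A (insert x B) := by
  apply le_antisymm
  · refine sup_le (fun f hf u hu => ?_) ?_
    · rcases hf hu with h | ⟨b, hb, hub⟩
      exacts [Or.inl h, Or.inr ⟨b, mem_insert_of_mem hb, hub⟩]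
    · rw [Ideal.span_singleton_le_iff_mem, mem_linkIdeal]
      intro u hu
      refine Or.inr ⟨x, mem_insert_self _ _, ?_⟩
      have : u = Finsupp.single x 1 := by simpa [support_X] using hu
      simp [this]
  · intro f hf
    rw [f.as_sum]
    refine Ideal.sum_mem _ fun u hu => ?_
    by_cases hux : u x = 0
    · refine Ideal.mem_sup_left fun v hv => ?_
      have hv : v = u := by simpa using support_monomial_subset hv
      subst hv
      rcases hf hu with h | ⟨b, hb, hub⟩
      · exact Or.inl h
      · rcases mem_insert.1 hb with rfl | hb
        exacts [absurd hux hub, Or.inr ⟨b, hb, hub⟩]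
    · refine Ideal.mem_sup_right (Ideal.mem_span_singleton.2 ?_)
      rw [X, monomial_dvd_monomial]
      exact ⟨Or.inr (Finsupp.single_le_iff.2 (by omega)), one_dvd _⟩

end ClusterGraphs

section DepthOfSquarefreePowers

open Finset

variable {σ ι : Type} [DecidableEq σ] [DecidableEq ι] [Fintype σ] [Fintype ι] (c : σ → ι)
  {K : Type} [Field K]

omit [Fintype σ] in
lemma linkIdeal_eq_top {k : ℕ} {A B : Finset σ} (hA : k ≤ pairCount c A) :
    linkIdeal c K k A B = ⊤ :=
  eq_top_iff.2 fun _ _ _ _ => Or.inl (hA.trans (pairCount_mono c subset_union_right))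

lemma linkIdeal_eq_varIdeal {k : ℕ} {A B : Finset σ} (hAB : Disjoint A B)
    (hB : pairCount c Bᶜ < k) : linkIdeal c K k A B = varIdeal K B := by
  ext f
  rw [mem_linkIdeal, mem_varIdeal]
  refine forall₂_congr fun u _ => or_iff_right_of_imp fun hu => ?_
  by_contra! hcon
  refine absurd (hu.trans (pairCount_mono c (union_subset (fun i hi => ?_) ?_))) hB.not_ge
  · rw [mem_compl]
    exact fun hiB => Finsupp.mem_support_iff.1 hi (hcon i hiB)
  · rwa [subset_compl_iff_disjoint_right]

omit [Fintype ι] in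
lemma colorCard_compl_insert {B : Finset σ} {x : σ} (hx : x ∉ B) (t : ι) :
    colorCard c Bᶜ t = colorCard c (insert x B)ᶜ t + if c x = t then 1 else 0 := by
  rw [← colorCard_insert c (by simp), compl_insert, insert_erase (by simpa using hx)]

lemma pairCount_compl_insert {B : Finset σ} {x : σ} (hx : x ∉ B) :
    pairCount c Bᶜ = pairCount c (insert x B)ᶜ + colorCard c (insert x B)ᶜ (c x) % 2 := by
  rw [← pairCount_insert c (by simp), compl_insert, insert_erase (by simpa using hx)]

omit [Fintype σ] [DecidableEq σ] in
lemma pairCount_le_of_forall {F A : Finset σ}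
    (h : ∀ x ∈ F, x ∉ A → colorCard c F (c x) = 1) : pairCount c F ≤ pairCount c A := by
  refine sum_le_sum fun t _ => ?_
  rcases le_or_gt (colorCard c F t) (colorCard c A t) with hle | hlt
  · exact Nat.div_le_div_right hle
  · obtain ⟨x, hxF, hxA, rfl⟩ := exists_notMem_of_colorCard_lt c hlt
    simp [h x hxF hxA]

omit [DecidableEq σ] in
lemma exists_colorCard_eq (a : ι → ℕ) (ha : ∀ t, a t ≤ colorCard c univ t) :
    ∃ F : Finset σ, ∀ t, colorCard c F t = a t := by
  classical
  choose S hS hcard using fun t => exists_subset_card_eq (ha t)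
  refine ⟨univ.biUnion S, fun t => ?_⟩
  rw [← hcard t, colorCard]
  congr 1
  ext x
  simp only [mem_filter, mem_biUnion, mem_univ, true_and]
  constructor
  · rintro ⟨⟨t', hx⟩, rfl⟩
    have := (mem_filter.1 (hS t' hx)).2
    rwa [this]
  · exact fun hx => ⟨⟨t, hx⟩, (mem_filter.1 (hS t hx)).2⟩

omit [Fintype σ] in
lemma sqMon_mul_mem_linkIdeal_iff {k : ℕ} (F : Finset σ) (h : MvPolynomial σ K) :
    sqMon K F * h ∈ linkIdeal c K k ∅ ∅ ↔ h ∈ linkIdeal c K k F ∅ := by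
  induction F using Finset.induction_on generalizing h with
  | empty => simp [sqMon]
  | insert x F hx ih =>
    rw [mem_linkIdeal_insert_left c (by simp), ← ih, sqMon, prod_insert hx]
    simp only [sqMon]
    ring_nf

lemma linkIdeal_eq_varIdeal_compl {k : ℕ} {F : Finset σ} (hF : pairCount c F < k)
    (hmax : ∀ x ∉ F, k ≤ pairCount c (insert x F)) :
    linkIdeal c K k F ∅ = varIdeal K Fᶜ := by
  ext f
  rw [mem_linkIdeal, mem_varIdeal]
  refine forall₂_congr fun u _ => ?_
  constructor
  · rintro (hu | ⟨b, hb, -⟩)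
    · by_contra! hcon
      refine absurd (hu.trans (pairCount_mono c (union_subset (fun i hi => ?_) subset_rfl)))
        hF.not_ge
      by_contra hiF
      exact Finsupp.mem_support_iff.1 hi (hcon i (by simpa using hiF))
    · simp at hb
  · rintro ⟨i, hi, hui⟩
    refine Or.inl ((hmax i (by simpa using hi)).trans (pairCount_mono c ?_))
    exact insert_subset (mem_union_left _ (Finsupp.mem_support_iff.2 hui)) subset_union_right

omit [DecidableEq σ] in
lemma idealOfVars_eq_varIdeal : idealOfVars σ K = varIdeal K univ := by
  simp [idealOfVars, varIdeal]

lemma isPrime_idealOfVars : (idealOfVars σ K).IsPrime := by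
  rw [idealOfVars_eq_varIdeal]
  exact isPrime_varIdeal _

lemma linkIdeal_le_idealOfVars {k : ℕ} (hk : 1 ≤ k) :
    linkIdeal c K k ∅ ∅ ≤ idealOfVars σ K := by
  intro f hf
  rw [idealOfVars_eq_varIdeal, mem_varIdeal]
  intro u hu
  by_contra! hcon
  have hu0 : u = 0 := Finsupp.ext fun i => hcon i (mem_univ i)
  have hcount : k ≤ pairCount c ∅ := by simpa [hu0] using hf hu
  have hempty : 2 * pairCount c ∅ ≤ 0 := two_mul_pairCount_le c ∅
  omega

/-- A maximal set of vertices inducing matching number less than `k` bounds the depth of the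
`k`-th squarefree power. -/
lemma length_le_of_isWeaklyRegular {k : ℕ} {F : Finset σ} (hF : pairCount c F < k)
    (hmax : ∀ x ∉ F, k ≤ pairCount c (insert x F)) {rs : List (MvPolynomial σ K)}
    (hmem : ∀ r ∈ rs, r ∈ idealOfVars σ K)
    (hrs : RingTheory.Sequence.IsWeaklyRegular (MvPolynomial σ K ⧸ linkIdeal c K k ∅ ∅) rs) :
    rs.length ≤ #F := by
  have := isPrime_idealOfVars (σ := σ) (K := K)
  have hass : IsAssociatedPrime (varIdeal K Fᶜ) (MvPolynomial σ K ⧸ linkIdeal c K k ∅ ∅) := by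
    refine isAssociatedPrime_iff.2
      ⟨isPrime_varIdeal _, Ideal.Quotient.mk _ (sqMon K F), ?_⟩
    ext h
    rw [Submodule.mem_colon_singleton, Submodule.mem_bot]
    change _ ↔ Ideal.Quotient.mk _ (h * sqMon K F) = 0
    rw [Ideal.Quotient.eq_zero_iff_mem, mul_comm, sqMon_mul_mem_linkIdeal_iff, linkIdeal_eq_varIdeal_compl c hF hmax]
  have hle : varIdeal K Fᶜ ≤ idealOfVars σ K := Ideal.span_mono (Set.image_subset_range _ _)
  have h := (length_le_ringKrullDim_quotient rs hrs _ hmem _ hass hle).trans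
    (ringKrullDim_quotient_varIdeal_le _)
  rw [compl_compl] at h
  exact_mod_cast h

/-- If a maximal set of vertices inducing matching number less than `k` has `d` elements and the
elementary symmetric polynomials of degree at most `d` form a regular sequence, then the depth
is `d`. -/
lemma polyDepth_linkIdeal {k : ℕ} (hk : 1 ≤ k) {F : Finset σ} (hF : pairCount c F < k)
    (hmax : ∀ x ∉ F, k ≤ pairCount c (insert x F))
    (hreg : IsRegularModulo (linkIdeal c K k ∅ ∅) (esymmList σ K #F)) :
    polyDepth K (linkIdeal c K k ∅ ∅) = #F := by
  have hmem : ∀ r ∈ esymmList σ K #F, r ∈ idealOfVars σ K := by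
    intro r hr
    obtain ⟨j, rfl⟩ := exists_eq_esymm_of_mem_esymmList hr
    exact esymm_succ_mem_idealOfVars j
  refine IsGreatest.csSup_eq
    ⟨⟨esymmList σ K #F, length_esymmList _, hmem, ⟨(isWeaklyRegular_quotient_iff _ _).2 hreg, ?_⟩⟩,
      ?_⟩
  · intro htop
    have hprime := isPrime_idealOfVars (σ := σ) (K := K)
    have hle : linkIdeal c K k ∅ ∅ ≤ idealOfVars σ K := linkIdeal_le_idealOfVars c hk
    let π : MvPolynomial σ K ⧸ linkIdeal c K k ∅ ∅ →ₗ[MvPolynomial σ K]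
        MvPolynomial σ K ⧸ idealOfVars σ K := Submodule.factor hle
    have hπ : (⊤ : Submodule (MvPolynomial σ K) _) ≤ LinearMap.ker π := by
      rw [htop, Submodule.smul_le]
      intro r hr x _
      have hr : r ∈ idealOfVars σ K := (Ideal.span_le.2 hmem) hr
      obtain ⟨y, rfl⟩ := Ideal.Quotient.mk_surjective x
      change Ideal.Quotient.mk (idealOfVars σ K) (r * y) = 0
      exact Ideal.Quotient.eq_zero_iff_mem.2 (Ideal.mul_mem_right _ _ hr)
    refine hprime.ne_top ((Ideal.eq_top_iff_one _).2 (Ideal.Quotient.eq_zero_iff_mem.1 ?_))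
    exact hπ (x := Ideal.Quotient.mk _ 1) trivial
  · rintro _ ⟨rs, rfl, hrs, hrs'⟩
    exact length_le_of_isWeaklyRegular c hF hmax hrs hrs'.toIsWeaklyRegular

lemma indeg_linkIdeal {k : ℕ} (hk : k ≤ pairCount c univ) :
    indeg K (linkIdeal c K k ∅ ∅) = 2 * k := by
  refine IsLeast.csInf_eq ⟨?_, ?_⟩
  · obtain ⟨F, -, hcard, hF, -⟩ := exists_matching_of_le_pairCount c K hk
    refine ⟨F, hcard, (sqMon_mem_linkIdeal c).2 (Or.inl ?_)⟩
    simpa using le_pairCount_of_sqMon_mem_pow c K hF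
  · rintro _ ⟨F, rfl, hF⟩
    have : k ≤ pairCount c F := by simpa [sqMon_mem_linkIdeal] using hF
    have := two_mul_pairCount_le c F
    omega

lemma matchNum_clusterGraph (h : Fintype.card σ ≤ 2 * pairCount c univ + 1) :
    matchNum (clusterGraph c) = pairCount c univ := by
  refine IsGreatest.csSup_eq ⟨?_, ?_⟩
  · obtain ⟨-, -, -, -, M, hM, hcard, -⟩ := exists_matching_of_le_pairCount c ℚ le_rfl
    exact ⟨M, hM, hcard⟩
  · rintro _ ⟨M, hM, rfl⟩
    have hdisj : (M : Set (Sym2 σ)).PairwiseDisjoint Sym2.toFinset := by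
      intro e he f hf hef
      refine disjoint_left.2 fun v hv hv' => ?_
      exact hM.2 e he f hf hef v (Sym2.mem_toFinset.1 hv) (Sym2.mem_toFinset.1 hv')
    have hcard : #(M.biUnion Sym2.toFinset) = #M * 2 := by
      rw [card_biUnion hdisj, sum_const_nat]
      intro e he
      exact Sym2.card_toFinset_of_not_isDiag e
        ((clusterGraph c).not_isDiag_of_mem_edgeSet (hM.1 he))
    have := card_le_univ (M.biUnion Sym2.toFinset)
    omega

end DepthOfSquarefreePowers

section OneLargeColor

open Finset

variable {σ κ : Type} [DecidableEq σ] [DecidableEq κ] [Fintype σ] [Fintype κ]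
  (c : σ → Option κ) {K : Type} [Field K]

omit [DecidableEq σ] [Fintype σ] in
lemma exists_pairCount_eq {F : Finset σ} (h₁ : ∀ t, 1 ≤ colorCard c F (some t))
    (h₂ : ∀ t, colorCard c F (some t) ≤ 2) :
    ∃ p ≤ Fintype.card κ, pairCount c F = p + colorCard c F none / 2 ∧
      #F = Fintype.card κ + p + colorCard c F none := by
  refine ⟨∑ t, colorCard c F (some t) / 2, ?_, ?_, ?_⟩
  · calc ∑ t, colorCard c F (some t) / 2 ≤ ∑ _t : κ, 1 :=
          sum_le_sum fun t _ => by have := h₂ t; omega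
      _ = Fintype.card κ := by simp
  · rw [pairCount, Fintype.sum_option, add_comm]
  · rw [← sum_colorCard c F, Fintype.sum_option, add_comm]
    have : Fintype.card κ = ∑ _t : κ, 1 := by simp
    rw [this, ← sum_add_distrib]
    congr 1
    refine sum_congr rfl fun t _ => ?_
    have := h₁ t
    have := h₂ t
    omega

/-- The elementary symmetric polynomials form a regular sequence modulo the ideals arising in a
vertex decomposition which splits the colours `some t` before the colour `none`. -/
lemma isRegularModulo_linkIdeal {k d : ℕ} (hd : d ≤ max (Fintype.card κ + k) (2 * k - 1))
    (hc : ∀ t, colorCard c univ (some t) ≤ 2) (A B : Finset σ) (hAB : Disjoint A B)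
    (hpos : ∀ t, 1 ≤ colorCard c Bᶜ (some t))
    (hnone : (Even (colorCard c Bᶜ none) ∧ 1 ≤ colorCard c Bᶜ none) ∨
      ∀ x, x ∉ A → x ∉ B → c x ≠ none → colorCard c Bᶜ (c x) = 1)
    (hcard : pairCount c Bᶜ < k → d ≤ #Bᶜ) :
    IsRegularModulo (linkIdeal c K k A B) (esymmList σ K d) := by
  obtain ⟨n, hn⟩ : ∃ n, #(A ∪ B)ᶜ = n := ⟨_, rfl⟩
  induction n using Nat.strong_induction_on generalizing A B with
  | _ n ih =>
  rcases le_or_gt k (pairCount c A) with hA | hA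
  · rw [linkIdeal_eq_top c hA]
    exact isRegularModulo_top _
  rcases lt_or_ge (pairCount c Bᶜ) k with hB | hB
  · rw [linkIdeal_eq_varIdeal c hAB hB]
    exact isRegularModulo_varIdeal_esymmList d B (hcard hB)
  have hle (t : κ) (B : Finset σ) : colorCard c Bᶜ (some t) ≤ 2 :=
    (colorCard_mono c (subset_univ _) _).trans (hc t)
  have branch : ∀ x, x ∉ A → x ∉ B →
      (∀ t, 1 ≤ colorCard c (insert x B)ᶜ (some t)) →
      ((Even (colorCard c Bᶜ none) ∧ 1 ≤ colorCard c Bᶜ none) ∨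
        ∀ y, y ∉ insert x A → y ∉ B → c y ≠ none → colorCard c Bᶜ (c y) = 1) →
      ((Even (colorCard c (insert x B)ᶜ none) ∧ 1 ≤ colorCard c (insert x B)ᶜ none) ∨
        ∀ y, y ∉ A → y ∉ insert x B → c y ≠ none → colorCard c (insert x B)ᶜ (c y) = 1) →
      (pairCount c (insert x B)ᶜ < k → d ≤ #(insert x B)ᶜ) →
      IsRegularModulo (linkIdeal c K k A B) (esymmList σ K d) := by
    intro x hxA hxB hpos' hlink hdel hcard'
    have hlt : ((A ∪ B)ᶜ.erase x).card < n := by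
      rw [← hn]
      exact card_erase_lt_of_mem (by simp [hxA, hxB])
    refine IsRegularModulo.of_colon_of_sup (x := X x)
      (fun h => mem_linkIdeal_insert_left c hxB) ?_ ?_
    · refine ih _ hlt (insert x A) B (disjoint_insert_left.2 ⟨hxB, hAB⟩) hpos hlink hcard ?_
      rw [insert_union, compl_insert]
    · rw [linkIdeal_sup_span_X]
      refine ih _ hlt A (insert x B) (disjoint_insert_right.2 ⟨hxA, hAB⟩) hpos' hdel hcard' ?_
      rw [union_insert, compl_insert]
  by_cases hsmall : ∀ x, x ∉ A → x ∉ B → c x ≠ none → colorCard c Bᶜ (c x) = 1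
  · obtain ⟨x, hxA, hxB, hx⟩ : ∃ x, x ∉ A ∧ x ∉ B ∧ c x = none := by
      by_contra! hcon
      have := pairCount_le_of_forall c (F := Bᶜ) (A := A) fun x hxB hxA =>
        hsmall x hxA (by simpa using hxB) (hcon x hxA (by simpa using hxB))
      omega
    have hcol (t : κ) : colorCard c (insert x B)ᶜ (some t) = colorCard c Bᶜ (some t) := by
      rw [colorCard_compl_insert c hxB, hx]
      simp
    have hpos' (t : κ) : 1 ≤ colorCard c (insert x B)ᶜ (some t) := (hcol t).symm ▸ hpos t
    refine branch x hxA hxB hpos' (Or.inr fun y hyA hyB hy => ?_)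
      (Or.inr fun y hyA hyB hy => ?_) fun hlt => ?_
    · exact hsmall y (fun h => hyA (mem_insert_of_mem h)) hyB hy
    · obtain ⟨t, ht⟩ := Option.ne_none_iff_exists'.1 hy
      have := hsmall y hyA (fun h => hyB (mem_insert_of_mem h)) hy
      rwa [ht, hcol, ← ht]
    · obtain ⟨p, hp, hpair, hF⟩ := exists_pairCount_eq c hpos' fun t => hle t _
      have := pairCount_compl_insert c hxB
      rw [hx] at this
      omega
  · push Not at hsmall
    obtain ⟨x, hxA, hxB, hx, hx1⟩ := hsmall
    obtain ⟨heven, hnone⟩ := hnone.resolve_right fun h => hx1 (h x hxA hxB hx)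
    have hcolnone : colorCard c (insert x B)ᶜ none = colorCard c Bᶜ none := by
      rw [colorCard_compl_insert c hxB, if_neg hx, add_zero]
    obtain ⟨t₀, ht₀⟩ := Option.ne_none_iff_exists'.1 hx
    have hpos' (t : κ) : 1 ≤ colorCard c (insert x B)ᶜ (some t) := by
      have h1 := colorCard_compl_insert c hxB (some t)
      have h2 := hpos t
      split_ifs at h1 with h
      · rw [h] at hx1
        omega
      · omega
    refine branch x hxA hxB hpos' (Or.inl ⟨heven, hnone⟩)
      (Or.inl (hcolnone ▸ ⟨heven, hnone⟩)) fun hlt => ?_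
    obtain ⟨p, -, hpair, hF⟩ := exists_pairCount_eq c hpos' fun t => hle t _
    obtain ⟨p', hp', hpair', hF'⟩ := exists_pairCount_eq c hpos fun t => hle t _
    have hins := pairCount_compl_insert c hxB
    rw [hcolnone] at hpair hF
    obtain ⟨r, hr⟩ := heven
    omega

/-- A maximal set of vertices inducing matching number less than `k`, of minimal size. -/
lemma exists_maximal_pairCount_lt {k r : ℕ} (hk : 1 ≤ k) (hr : 1 ≤ r)
    (hkr : k ≤ Fintype.card κ + r) (hsome : ∀ t, colorCard c univ (some t) = 2)
    (hnone : colorCard c univ none = 2 * r) :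
    ∃ F : Finset σ, #F = max (Fintype.card κ + k) (2 * k - 1) ∧ pairCount c F < k ∧
      ∀ x ∉ F, k ≤ pairCount c (insert x F) := by
  obtain ⟨T, -, hT⟩ := exists_subset_card_eq (s := (univ : Finset κ))
    (n := min (k - 1) (Fintype.card κ)) (by simp)
  obtain ⟨F, hF⟩ := exists_colorCard_eq c
    (fun t => t.elim (2 * (k - 1 - #T) + 1) fun t => if t ∈ T then 2 else 1) (by
      rintro (_ | t)
      · rw [hnone]
        simp only [Option.elim]
        omega
      · rw [hsome]
        simp only [Option.elim]
        split_ifs <;> omega)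
  have hFsome (t : κ) : colorCard c F (some t) = if t ∈ T then 2 else 1 := hF _
  have hFnone : colorCard c F none = 2 * (k - 1 - #T) + 1 := hF _
  have hpair : pairCount c F = k - 1 := by
    have h1 : ∑ t, colorCard c F (some t) / 2 = #T := by
      rw [show #T = #{t | t ∈ T} by simp, card_filter]
      refine sum_congr rfl fun t _ => ?_
      rw [hFsome]
      split_ifs <;> rfl
    rw [pairCount, Fintype.sum_option, h1, hFnone]
    omega
  refine ⟨F, ?_, by omega, fun x hx => ?_⟩
  · obtain ⟨p, hp, hpair', hcard⟩ := exists_pairCount_eq c (F := F)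
      (fun t => by rw [hFsome]; split_ifs <;> omega)
      (fun t => by rw [hFsome]; split_ifs <;> omega)
    omega
  · rw [pairCount_insert c hx]
    suffices colorCard c F (c x) % 2 = 1 by omega
    have hlt : colorCard c F (c x) + 1 ≤ colorCard c univ (c x) := by
      have := colorCard_insert c hx (c x)
      rw [if_pos rfl] at this
      rw [← this]
      exact colorCard_mono c (subset_univ _) _
    rcases hcx : c x with _ | t
    · rw [hFnone]
      omega
    · rw [hcx, hsome, hFsome] at hlt
      rw [hFsome]
      split_ifs at hlt ⊢ <;> omega

lemma nDepth_clusterGraph {k r : ℕ} (hk : 1 ≤ k) (hr : 1 ≤ r) (hkr : k ≤ Fintype.card κ + r)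
    (hsome : ∀ t, colorCard c univ (some t) = 2) (hnone : colorCard c univ none = 2 * r) :
    nDepth K (edgeIdeal K (clusterGraph c)) k =
      (max (Fintype.card κ + k) (2 * k - 1) : ℕ) - (2 * k - 1 : ℤ) := by
  have hpair : pairCount c univ = Fintype.card κ + r := by
    simp [pairCount, hsome, hnone, add_comm]
  obtain ⟨F, hcard, hF, hmax⟩ := exists_maximal_pairCount_lt c hk hr hkr hsome hnone
  have hreg : IsRegularModulo (linkIdeal c K k ∅ ∅) (esymmList σ K #F) :=
    isRegularModulo_linkIdeal c hcard.le (fun t => (hsome t).le) ∅ ∅ (disjoint_empty_left _)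
      (fun t => by simp [hsome]) (Or.inl (by simp [hnone]; omega)) (by simp; omega)
  rw [nDepth, sqfreePower_clusterGraph, polyDepth_linkIdeal c hk hF hmax hreg,
    indeg_linkIdeal c (by omega), hcard]
  push_cast
  ring

end OneLargeColor

open Finset in
lemma exists_coloring (s r : ℕ) :
    ∃ c : Fin (2 * (s + r)) → Option (Fin s),
      (∀ t, colorCard c univ (some t) = 2) ∧ colorCard c univ none = 2 * r := by
  let size : Option (Fin s) → ℕ := fun t => t.elim (2 * r) fun _ => 2
  have hcard : Fintype.card (Σ t, Fin (size t)) = 2 * (s + r) := by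
    simp [size, Fintype.sum_option]
    ring
  let e := (Fintype.equivFinOfCardEq hcard).symm
  have h : ∀ t, colorCard (fun x => (e x).1) univ t = size t := by
    intro t
    have himage : #{x | (e x).1 = t} = #{p : Σ t, Fin (size t) | p.1 = t} :=
      card_equiv e fun x => by simp
    rw [colorCard, himage, ← Fintype.card_subtype, Fintype.card_congr (Equiv.sigmaSubtype t),
      Fintype.card_fin]
  exact ⟨_, fun t => h _, h _⟩

/-- Given positive integers `s < m`, there exists a graph `G` with no isolated vertices
and matching number `ν(G) = m` such that `g_{I(G)}(k) = s − (k−1)` for `k = 1,…,s` and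
`g_{I(G)}(k) = 0` for `k = s+1,…,m`. -/
theorem exists_graph_normalized_depth_prescribed (K : Type) [Field K]
    (s m : ℕ) (hs : 1 ≤ s) (hsm : s < m) :
    ∃ (n : ℕ) (G : SimpleGraph (Fin n)), NoIsolated G ∧ matchNum G = m ∧
      (∀ k : ℕ, 1 ≤ k → k ≤ s →
        nDepth K (edgeIdeal K G) k = (s : ℤ) - ((k : ℤ) - 1)) ∧
      (∀ k : ℕ, s + 1 ≤ k → k ≤ m → nDepth K (edgeIdeal K G) k = 0) := by
  obtain ⟨r, rfl⟩ := Nat.exists_eq_add_of_lt hsm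
  obtain ⟨c, hsome, hnone⟩ := exists_coloring s (r + 1)
  have hpair : pairCount c Finset.univ = s + (r + 1) := by
    simp [pairCount, hsome, hnone, add_comm]
  refine ⟨_, clusterGraph c, noIsolated_clusterGraph c fun x => ?_, ?_, fun k hk hks => ?_,
    fun k hks hkm => ?_⟩
  · have hlt : 1 < colorCard c Finset.univ (c x) := by
      rcases c x with _ | t
      · rw [hnone]
        omega
      · rw [hsome]
        omega
    obtain ⟨y, hy, hyx⟩ := Finset.exists_mem_ne hlt x
    exact ⟨y, hyx, (Finset.mem_filter.1 hy).2⟩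
  · rw [matchNum_clusterGraph c (by rw [hpair, Fintype.card_fin]; omega), hpair, add_assoc]
  · rw [nDepth_clusterGraph c hk (by omega) (by rw [Fintype.card_fin]; omega) hsome hnone,
      Fintype.card_fin]
    omega
  · rw [nDepth_clusterGraph c (by omega) (by omega) (by rw [Fintype.card_fin]; omega) hsome hnone,
      Fintype.card_fin]
    omega
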